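/- Let n ≥ 1, let Φ ∈ ℂ^{2n×2n} satisfy Φᵀ J Φ = J (where Φᵀ is the transpose without conjugation; equivalently conj(Φ)* J Φ = J), and let τ ∈ ℝ with τ ≠ 0. Define 𝒜 := (1/(2τ)) Φ* (J/i) Φ. If v ∈ ℂ^{2n} is nonzero, ν ∈ ℝ, and 𝒜 v = ν v, then ν ≠ 0, the vector J v̄ (where v̄ is the entrywise complex conjugate of v) is nonzero, and 𝒜 (J v̄) = − (1 / ((2τ)² ν)) (J v̄). In other words, if ν is an eigenvalue of 𝒜 with eigenvector v, then −1/((2τ)²ν) is an eigenvalue of 𝒜 with eigenvector J v̄. -/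

import Mathlib

open Matrix

/-- The standard `2n × 2n` complex symplectic matrix `J = [[0, -Iₙ],[Iₙ, 0]]`,
with `ℂ^{2n}` realized as functions on `Fin n ⊕ Fin n`. -/
noncomputable def symJ (n : ℕ) : Matrix (Fin n ⊕ Fin n) (Fin n ⊕ Fin n) ℂ :=
  Matrix.fromBlocks 0 (-1) 1 0

theorem symJ_sq_aux (n : ℕ) : symJ n * symJ n = -1 := Matrix.J_squared (Fin n) ℂ

theorem symJ_conj_aux (n : ℕ) : (symJ n)ᴴᵀ = symJ n := by
  simp [symJ, fromBlocks_conjTranspose, fromBlocks_transpose]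

theorem niessen_key_aux (n : ℕ)
    (Φ : Matrix (Fin n ⊕ Fin n) (Fin n ⊕ Fin n) ℂ)
    (hΦ : Φᵀ * symJ n * Φ = symJ n) (τ : ℝ)
    (A : Matrix (Fin n ⊕ Fin n) (Fin n ⊕ Fin n) ℂ)
    (hA : A = (1 / (2 * (τ : ℂ))) • (Φᴴ * (Complex.I⁻¹ • symJ n) * Φ)) :
    A * (symJ n * Aᴴᵀ) = (-(1 / (2 * (τ : ℂ))) ^ 2 : ℂ) • symJ n := by
  have hJ := symJ_sq_aux n
  have hJc := symJ_conj_aux n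
  generalize symJ n = J at *
  have h1 : (-(J * Φᵀ * J)) * Φ = 1 := by
    rw [neg_mul, Matrix.mul_assoc, Matrix.mul_assoc, ← Matrix.mul_assoc Φᵀ, hΦ, hJ, neg_neg]
  have h2 : Φ * J * Φᵀ * J = -1 := by
    have := mul_eq_one_comm.mp h1
    rw [mul_neg, neg_eq_iff_eq_neg] at this
    simpa only [Matrix.mul_assoc] using this
  have h3 : Φᴴ * J * Φᴴᵀ = J := by
    have := congrArg (fun M => Mᴴᵀ) hΦ
    simp only [conjTranspose_mul, transpose_mul, hJc] at this
    exact this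
  have h4 : Aᴴᵀ = (1 / (2 * (τ : ℂ))) • (Complex.I • (Φᵀ * J * Φᴴᵀ)) := by
    rw [hA]
    simp [conjTranspose_smul, conjTranspose_mul, transpose_mul, hJc, Matrix.mul_assoc]
  have h5 : (Φᴴ * J * Φ) * (J * (Φᵀ * J * Φᴴᵀ)) = -J := by
    calc _ = Φᴴ * J * (Φ * J * Φᵀ * J) * Φᴴᵀ := by simp only [Matrix.mul_assoc]
      _ = -J := by rw [h2]; simp [h3]
  have h6 : A = (1 / (2 * (τ : ℂ))) • (Complex.I⁻¹ • (Φᴴ * J * Φ)) := by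
    rw [hA]; simp
  rw [h4, h6]
  simp only [Matrix.smul_mul, Matrix.mul_smul, h5, smul_smul, smul_neg, neg_smul]
  congr 2
  have := Complex.I_ne_zero
  field_simp

/-- If `Φᵀ J Φ = J` and `𝒜 = (1/(2τ)) Φ* (J/i) Φ` with `τ ≠ 0` real, then from an
eigenpair `𝒜 v = ν v` (`ν` real, `v ≠ 0`) one obtains `ν ≠ 0`, `J v̄ ≠ 0`, and
`𝒜 (J v̄) = −(1/((2τ)² ν)) (J v̄)`. -/
theorem niessen_eigenvalue_pairing
    (n : ℕ) (hn : 1 ≤ n)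
    (Φ : Matrix (Fin n ⊕ Fin n) (Fin n ⊕ Fin n) ℂ)
    (hΦ : Φᵀ * symJ n * Φ = symJ n)
    (τ : ℝ) (hτ : τ ≠ 0)
    (A : Matrix (Fin n ⊕ Fin n) (Fin n ⊕ Fin n) ℂ)
    (hA : A = (1 / (2 * (τ : ℂ))) • (Φᴴ * (Complex.I⁻¹ • symJ n) * Φ))
    (v : (Fin n ⊕ Fin n) → ℂ) (hv : v ≠ 0) (ν : ℝ)
    (heig : A *ᵥ v = (ν : ℂ) • v) :
    ν ≠ 0
    ∧ symJ n *ᵥ star v ≠ 0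
    ∧ A *ᵥ (symJ n *ᵥ star v)
        = ((-(1 / ((2 * τ) ^ 2 * ν)) : ℝ) : ℂ) • (symJ n *ᵥ star v) := by
  have hJ := symJ_sq_aux n
  have key := niessen_key_aux n Φ hΦ τ A hA
  have hτ' : (τ : ℂ) ≠ 0 := by exact_mod_cast hτ
  have hw : symJ n *ᵥ star v ≠ 0 := by
    intro h
    have h' := congrArg (fun w => symJ n *ᵥ w) h
    simp only [mulVec_mulVec, hJ, neg_mulVec, one_mulVec, mulVec_zero, neg_eq_zero,
      star_eq_zero] at h'
    exact hv h'
  have hs : Aᴴᵀ *ᵥ star v = (ν : ℂ) • star v := by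
    rw [mulVec_transpose, ← star_mulVec, heig, star_smul]
    simp
  have hk := congrArg (fun M => M *ᵥ star v) key
  simp only [← mulVec_mulVec, hs, mulVec_smul, smul_mulVec] at hk
  have hν : ν ≠ 0 := by
    rintro rfl
    rw [Complex.ofReal_zero, zero_smul, eq_comm, smul_eq_zero] at hk
    rcases hk with hk | hk
    · simp [hτ] at hk
    · exact hw hk
  have hν' : (ν : ℂ) ≠ 0 := by exact_mod_cast hν
  refine ⟨hν, hw, ?_⟩
  have := congrArg (fun w => (ν : ℂ)⁻¹ • w) hk
  simp only [smul_smul, inv_mul_cancel₀ hν', one_smul] at this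
  rw [this]
  congr 1
  push_cast
  field_simp
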